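/- arXiv:1507.01813 — 2 statements merged into one kernel-verified Lean document; each statement's English description precedes it below -/
import Mathlib

section
/- Let n ∈ ℤ³ with n ≠ 0 and let ω ∈ ℂ³ with Im(n·ω) ≠ 0. Then the following are equivalent: (i) there exist φ̂ ∈ ℂ and a measurable f̂ : ℝ³ → ℂ, not almost everywhere zero, with (1+|v|²)·f̂ integrable, such that (n·(v − ω))·f̂(v) = (n·∇μ(v))·φ̂ for almost every v ∈ ℝ³ and φ̂ = −(1/|n|²)·Σ_{j,ℓ} n_j n_ℓ ∫_{ℝ³} v_j v_ℓ f̂(v) dv; (ii) the Penrose instability relation (1/|n|²)·Σ_{j,ℓ} n_j n_ℓ ∫_{ℝ³} v_j v_ℓ (n·∇μ(v)) / (n·(v − ω)) dv = −1 holds. In either case λ := −i n·ω is an eigenvalue of the linearized kinetic incompressible Euler operator. -/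
open MeasureTheory

noncomputable section

abbrev E3 : Type := EuclideanSpace ℝ (Fin 3)

/-- Partial derivative in the `i`-th coordinate for functions on `ℝ³`. -/
noncomputable def pdE (i : Fin 3) (g : E3 → ℝ) : E3 → ℝ :=
  fun v => fderiv ℝ g v (EuclideanSpace.single i 1)

/-- The dispersion denominator `n·(v - ω)` is bounded below by `|Im (n·ω)|`. -/
lemma abs_im_le_norm_dispersion (n : Fin 3 → ℤ) (ω : Fin 3 → ℂ) (v : E3) :
    |(∑ i, (n i : ℂ) * ω i).im| ≤ ‖∑ i, (n i : ℂ) * ((v i : ℂ) - ω i)‖ := by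
  refine le_trans (le_of_eq ?_) (Complex.abs_im_le_norm _)
  rw [← abs_neg]
  congr 1
  simp [mul_sub, Finset.sum_sub_distrib]

/-- `|n·∇μ| ≤ (∑ |nᵢ|) |∇μ|`. -/
lemma norm_sum_mul_pdE_le (n : Fin 3 → ℤ) (μ : E3 → ℝ) (v : E3) :
    ‖∑ i, (n i : ℂ) * (pdE i μ v : ℂ)‖
      ≤ (∑ i, |(n i : ℝ)|) * Real.sqrt (∑ i, (pdE i μ v) ^ 2) := by
  rw [Finset.sum_mul]
  refine norm_sum_le_of_le _ fun i _ => ?_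
  rw [norm_mul, Complex.norm_intCast, Complex.norm_real, Real.norm_eq_abs]
  gcongr
  exact Real.abs_le_sqrt
    (Finset.single_le_sum (f := fun i => (pdE i μ v) ^ 2) (fun _ _ => sq_nonneg _)
      (Finset.mem_univ i))

lemma continuous_pdE {μ : E3 → ℝ} (hμ : ContDiff ℝ 1 μ) (i : Fin 3) : Continuous (pdE i μ) :=
  (hμ.continuous_fderiv one_ne_zero).clm_apply continuous_const

lemma continuous_penrose_profile {μ : E3 → ℝ} (hμ : ContDiff ℝ 1 μ) (n : Fin 3 → ℤ)
    (ω : Fin 3 → ℂ) (hD : ∀ v : E3, ∑ i, (n i : ℂ) * ((v i : ℂ) - ω i) ≠ 0) :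
    Continuous fun v : E3 => (∑ i, (n i : ℂ) * (pdE i μ v : ℂ))
      / (∑ i, (n i : ℂ) * ((v i : ℂ) - ω i)) := by
  have := continuous_pdE hμ
  exact Continuous.div (by fun_prop) (by fun_prop) hD

/-- The profile `(n·∇μ)/(n·(v - ω))` has finite second moment. -/
lemma integrable_penrose_profile {μ : E3 → ℝ} (hμ : ContDiff ℝ 1 μ)
    (hμint : Integrable (fun v : E3 => (1 + ‖v‖) ^ 3 * Real.sqrt (∑ i, (pdE i μ v) ^ 2)))
    (n : Fin 3 → ℤ) (ω : Fin 3 → ℂ) (himω : (∑ i, (n i : ℂ) * ω i).im ≠ 0)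
    (hD : ∀ v : E3, ∑ i, (n i : ℂ) * ((v i : ℂ) - ω i) ≠ 0) :
    Integrable fun v : E3 => ((1 + ‖v‖ ^ 2 : ℝ) : ℂ) *
      ((∑ i, (n i : ℂ) * (pdE i μ v : ℂ)) / (∑ i, (n i : ℂ) * ((v i : ℂ) - ω i))) := by
  have hg := continuous_penrose_profile hμ n ω hD
  refine (hμint.const_mul ((∑ i, |(n i : ℝ)|) / |(∑ i, (n i : ℂ) * ω i).im|)).mono'
    (Continuous.aestronglyMeasurable
      ((Complex.continuous_ofReal.comp (by fun_prop)).mul hg)) (.of_forall fun v => ?_)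
  have hw : 1 + ‖v‖ ^ 2 ≤ (1 + ‖v‖) ^ 3 := by
    nlinarith [norm_nonneg v, pow_nonneg (norm_nonneg v) 2, pow_nonneg (norm_nonneg v) 3]
  rw [norm_mul, norm_div, Complex.norm_real, Real.norm_of_nonneg (by positivity)]
  have him := abs_pos.2 himω
  calc (1 + ‖v‖ ^ 2) * (‖∑ i, (n i : ℂ) * (pdE i μ v : ℂ)‖
        / ‖∑ i, (n i : ℂ) * ((v i : ℂ) - ω i)‖)
      ≤ (1 + ‖v‖) ^ 3 * (((∑ i, |(n i : ℝ)|) * Real.sqrt (∑ i, (pdE i μ v) ^ 2))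
        / |(∑ i, (n i : ℂ) * ω i).im|) := by
        gcongr
        · exact norm_sum_mul_pdE_le n μ v
        · exact abs_im_le_norm_dispersion n ω v
    _ = _ := by ring

/-- Characterization of growing modes of the linearized kinetic incompressible Euler operator:
for `n ∈ ℤ³ \ {0}` and `ω ∈ ℂ³` with `Im(n·ω) ≠ 0`, the existence of a nontrivial pair
`(f̂, φ̂)` with `(n·(v - ω))·f̂(v) = (n·∇μ(v))·φ̂` a.e. and
`φ̂ = -(1/|n|²)·Σ_{j,ℓ} n_j n_ℓ ∫ v_j v_ℓ f̂ dv` is equivalent to the Penrose instability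
relation `(1/|n|²)·Σ_{j,ℓ} n_j n_ℓ ∫ v_j v_ℓ (n·∇μ(v))/(n·(v-ω)) dv = -1`
(in either case `λ := -i n·ω` is an eigenvalue of the linearized operator). -/
theorem penrose_instability_characterization (μ : E3 → ℝ) (hμ : ContDiff ℝ 1 μ)
    (hμint : Integrable (fun v : E3 => (1 + ‖v‖) ^ 3 * Real.sqrt (∑ i, (pdE i μ v) ^ 2)))
    (n : Fin 3 → ℤ) (hn : n ≠ 0) (ω : Fin 3 → ℂ)
    (himω : (∑ i, (n i : ℂ) * ω i).im ≠ 0) :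
    (∃ (φ : ℂ) (f : E3 → ℂ), Measurable f ∧ ¬ (f =ᵐ[volume] 0) ∧
        Integrable (fun v : E3 => ((1 + ‖v‖ ^ 2 : ℝ) : ℂ) * f v) ∧
        (∀ᵐ v : E3,
          (∑ i, (n i : ℂ) * ((v i : ℂ) - ω i)) * f v
            = (∑ i, (n i : ℂ) * (pdE i μ v : ℂ)) * φ) ∧
        φ = -((1 : ℂ) / ((∑ i, ((n i : ℝ)) ^ 2 : ℝ) : ℂ)) *
              ∑ j, ∑ l, (n j : ℂ) * (n l : ℂ) *
                ∫ v : E3, ((v j : ℂ) * (v l : ℂ)) * f v)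
      ↔ ((1 : ℂ) / ((∑ i, ((n i : ℝ)) ^ 2 : ℝ) : ℂ)) *
          (∑ j, ∑ l, (n j : ℂ) * (n l : ℂ) *
            ∫ v : E3, ((v j : ℂ) * (v l : ℂ)) *
              (∑ i, (n i : ℂ) * (pdE i μ v : ℂ))
                / (∑ i, (n i : ℂ) * ((v i : ℂ) - ω i)))
        = -1 := by
  have hD : ∀ v : E3, ∑ i, (n i : ℂ) * ((v i : ℂ) - ω i) ≠ 0 := fun v =>
    norm_pos_iff.1 ((abs_pos.2 himω).trans_le (abs_im_le_norm_dispersion n ω v))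
  simp only [mul_div_assoc]
  constructor
  · rintro ⟨φ, f, -, hf0, -, hf, hφ⟩
    have hfg : ∀ᵐ v : E3, f v = (∑ i, (n i : ℂ) * (pdE i μ v : ℂ))
        / (∑ i, (n i : ℂ) * ((v i : ℂ) - ω i)) * φ := by
      filter_upwards [hf] with v hv
      rw [div_mul_eq_mul_div, eq_div_iff (hD v), ← hv, mul_comm]
    have hφ0 : φ ≠ 0 := by
      rintro rfl
      exact hf0 (hfg.mono fun v hv => by simpa using hv)
    have hint : ∀ j l : Fin 3, ∫ v : E3, ((v j : ℂ) * (v l : ℂ)) * f v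
        = (∫ v : E3, ((v j : ℂ) * (v l : ℂ)) * ((∑ i, (n i : ℂ) * (pdE i μ v : ℂ))
          / (∑ i, (n i : ℂ) * ((v i : ℂ) - ω i)))) * φ := fun j l => by
      rw [← integral_mul_const]
      refine integral_congr_ae (hfg.mono fun v hv => ?_)
      simp only [hv, mul_assoc]
    simp only [hint, ← mul_assoc, ← Finset.sum_mul] at hφ
    refine mul_right_cancel₀ hφ0 ?_
    linear_combination hφ
  · intro h
    refine ⟨1, fun v => (∑ i, (n i : ℂ) * (pdE i μ v : ℂ))
      / (∑ i, (n i : ℂ) * ((v i : ℂ) - ω i)),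
      (continuous_penrose_profile hμ n ω hD).measurable, fun h0 => ?_,
      integrable_penrose_profile hμ hμint n ω himω hD,
      .of_forall fun v => by rw [mul_div_cancel₀ _ (hD v), mul_one],
      by rw [neg_mul, h, neg_neg]⟩
    have hint : ∀ j l : Fin 3, ∫ v : E3, ((v j : ℂ) * (v l : ℂ)) *
        ((∑ i, (n i : ℂ) * (pdE i μ v : ℂ)) / (∑ i, (n i : ℂ) * ((v i : ℂ) - ω i))) = 0 :=
      fun j l => integral_eq_zero_of_ae (h0.mono fun v hv => by
        simp only [Pi.zero_apply] at hv ⊢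
        rw [hv, mul_zero])
    simp [hint] at h

end
end

section
/- Let λ ∈ ℂ with Re λ ≠ 0 and suppose D(λ) := 1 − i ∫_{ℝ³} v₁² ∂_{v₁}μ(v) / (λ + i v₁) dv ≠ 0. Let h : ℝ³ → ℂ be measurable with (1+|v|²)·h integrable. Then there is a unique measurable f : ℝ³ → ℂ with (1+|v|²)·f integrable solving the resolvent equation f(v) + i ∂_{v₁}μ(v)·φ / (λ + i v₁) = h(v)/(λ + i v₁) for almost every v, where φ := −∫_{ℝ³} v₁² f(v) dv; moreover its multiplier satisfies φ = −(1/D(λ)) ∫_{ℝ³} v₁² h(v) / (λ + i v₁) dv. -/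
open MeasureTheory

noncomputable section

/-- The denominator `l + i x` stays at distance at least `|Re l|` from the origin. -/
lemma abs_re_le_norm_add_I_mul (l : ℂ) (x : ℝ) : |l.re| ≤ ‖l + Complex.I * (x : ℂ)‖ := by
  simpa using Complex.abs_re_le_norm (l + Complex.I * (x : ℂ))

/-- Dividing a weighted integrable function by `l + i v₁` and replacing the weight `1 + |v|²` by a
smaller measurable one preserves integrability. -/
lemma integrable_mul_div_of_weighted {l : ℂ} (hl : l.re ≠ 0) {k : E3 → ℂ} (hk : Measurable k)
    (hint : Integrable (fun v : E3 => ((1 + ‖v‖ ^ 2 : ℝ) : ℂ) * k v))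
    {q : E3 → ℝ} (hq : Measurable q) (hqle : ∀ v, |q v| ≤ 1 + ‖v‖ ^ 2) :
    Integrable (fun v : E3 => (q v : ℂ) * k v / (l + Complex.I * (v 0 : ℂ))) := by
  refine (hint.norm.div_const |l.re|).mono' (Measurable.aestronglyMeasurable (by fun_prop))
    (.of_forall fun v => ?_)
  have hw : (0 : ℝ) ≤ 1 + ‖v‖ ^ 2 := by positivity
  rw [norm_div, norm_mul, norm_mul, Complex.norm_real, Complex.norm_real, Real.norm_eq_abs,
    Real.norm_of_nonneg hw]
  have := abs_pos.mpr hl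
  gcongr
  · exact hqle v
  · exact abs_re_le_norm_add_I_mul l (v 0)

lemma sq_coord_le (v : E3) : |(v 0) ^ 2| ≤ 1 + ‖v‖ ^ 2 := by
  have h0 : ‖v 0‖ ≤ ‖v‖ := PiLp.norm_apply_le v 0
  rw [abs_pow, ← Real.norm_eq_abs]
  have : ‖v 0‖ ^ 2 ≤ ‖v‖ ^ 2 := by gcongr
  linarith

lemma measurable_pdE {μ : E3 → ℝ} (i : Fin 3) : Measurable (pdE i μ) :=
  measurable_fderiv_apply_const ℝ μ _

lemma integrable_weighted_pdE {μ : E3 → ℝ}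
    (hμint : Integrable (fun v : E3 => (1 + ‖v‖) ^ 3 * Real.sqrt (∑ i, (pdE i μ v) ^ 2)))
    (i : Fin 3) :
    Integrable (fun v : E3 => ((1 + ‖v‖ ^ 2 : ℝ) : ℂ) * (pdE i μ v : ℂ)) := by
  have hp := measurable_pdE (μ := μ) i
  refine hμint.mono' (by fun_prop) (.of_forall fun v => ?_)
  rw [norm_mul, Complex.norm_real, Complex.norm_real, Real.norm_of_nonneg (by positivity)]
  have hn := norm_nonneg v
  gcongr
  · nlinarith [pow_nonneg hn 3]
  · exact Real.abs_le_sqrt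
      (Finset.single_le_sum (f := fun j => pdE j μ v ^ 2) (fun j _ => sq_nonneg _)
        (Finset.mem_univ i))

/-- The `v₁²`-moment of a solution of the resolvent equation with prescribed multiplier `c`. -/
lemma integral_sq_mul_of_resolvent_eq {μ : E3 → ℝ}
    (hμint : Integrable (fun v : E3 => (1 + ‖v‖) ^ 3 * Real.sqrt (∑ i, (pdE i μ v) ^ 2)))
    {l : ℂ} (hl : l.re ≠ 0) {h : E3 → ℂ} (hmeas : Measurable h)
    (hint : Integrable (fun v : E3 => ((1 + ‖v‖ ^ 2 : ℝ) : ℂ) * h v)) {g : E3 → ℂ} {c : ℂ}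
    (hg : ∀ᵐ v : E3, g v + Complex.I * (pdE 0 μ v : ℂ) * c / (l + Complex.I * (v 0 : ℂ))
      = h v / (l + Complex.I * (v 0 : ℂ))) :
    ∫ w : E3, (((w 0) ^ 2 : ℝ) : ℂ) * g w
      = (∫ v : E3, (((v 0) ^ 2 : ℝ) : ℂ) * h v / (l + Complex.I * (v 0 : ℂ)))
        - Complex.I * c * ∫ v : E3, (((v 0) ^ 2 : ℝ) : ℂ) * (pdE 0 μ v : ℂ)
            / (l + Complex.I * (v 0 : ℂ)) := by
  have hp := measurable_pdE (μ := μ) 0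
  have hq : Measurable fun v : E3 => (v 0) ^ 2 := by fun_prop
  have hH := integrable_mul_div_of_weighted hl hmeas hint hq sq_coord_le
  have hA := integrable_mul_div_of_weighted hl (by fun_prop) (integrable_weighted_pdE hμint 0)
    hq sq_coord_le
  rw [← integral_const_mul, ← integral_sub hH (hA.const_mul _)]
  refine integral_congr_ae ?_
  filter_upwards [hg] with v hv
  rw [eq_sub_of_add_eq hv]
  ring

/-- Solvability of the resolvent equation `(λ - 𝓛₁)f = h`: for `Re λ ≠ 0` with
`D(λ) := 1 - i∫ v₁² ∂_{v₁}μ/(λ + iv₁) dv ≠ 0` and `(1+|v|²)h` integrable, there is a unique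
(up to a.e. equality) measurable `f` with `(1+|v|²)f` integrable solving
`f + i∂_{v₁}μ·φ/(λ + iv₁) = h/(λ + iv₁)` a.e., where `φ := -∫ v₁² f dv`; moreover
`φ = -(1/D(λ))·∫ v₁² h/(λ + iv₁) dv`. -/
theorem resolvent_equation_solvability (μ : E3 → ℝ) (hμ : ContDiff ℝ 1 μ)
    (hμint : Integrable (fun v : E3 => (1 + ‖v‖) ^ 3 * Real.sqrt (∑ i, (pdE i μ v) ^ 2)))
    (l : ℂ) (hl : l.re ≠ 0)
    (hD : (1 : ℂ) - Complex.I *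
        ∫ v : E3, (((v 0) ^ 2 : ℝ) : ℂ) * (pdE 0 μ v : ℂ) / (l + Complex.I * (v 0 : ℂ)) ≠ 0)
    (h : E3 → ℂ) (hmeas : Measurable h)
    (hint : Integrable (fun v : E3 => ((1 + ‖v‖ ^ 2 : ℝ) : ℂ) * h v)) :
    ∃ f : E3 → ℂ,
      (Measurable f ∧ Integrable (fun v : E3 => ((1 + ‖v‖ ^ 2 : ℝ) : ℂ) * f v) ∧
        (∀ᵐ v : E3,
          f v + Complex.I * (pdE 0 μ v : ℂ) *
              (-(∫ w : E3, (((w 0) ^ 2 : ℝ) : ℂ) * f w)) / (l + Complex.I * (v 0 : ℂ))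
            = h v / (l + Complex.I * (v 0 : ℂ)))) ∧
      (-(∫ w : E3, (((w 0) ^ 2 : ℝ) : ℂ) * f w)
        = -((1 : ℂ) / ((1 : ℂ) - Complex.I *
              ∫ v : E3, (((v 0) ^ 2 : ℝ) : ℂ) * (pdE 0 μ v : ℂ)
                / (l + Complex.I * (v 0 : ℂ)))) *
            ∫ v : E3, (((v 0) ^ 2 : ℝ) : ℂ) * h v / (l + Complex.I * (v 0 : ℂ))) ∧
      (∀ g : E3 → ℂ, Measurable g →
        Integrable (fun v : E3 => ((1 + ‖v‖ ^ 2 : ℝ) : ℂ) * g v) →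
        (∀ᵐ v : E3,
          g v + Complex.I * (pdE 0 μ v : ℂ) *
              (-(∫ w : E3, (((w 0) ^ 2 : ℝ) : ℂ) * g w)) / (l + Complex.I * (v 0 : ℂ))
            = h v / (l + Complex.I * (v 0 : ℂ))) →
        g =ᵐ[volume] f) := by
  set A := ∫ v : E3, (((v 0) ^ 2 : ℝ) : ℂ) * (pdE 0 μ v : ℂ) / (l + Complex.I * (v 0 : ℂ)) with hA
  set H := ∫ v : E3, (((v 0) ^ 2 : ℝ) : ℂ) * h v / (l + Complex.I * (v 0 : ℂ)) with hH
  have multiplier_eq {m c : ℂ} (hm : m = H - Complex.I * c * A) (hc : -m = c) :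
      c = -(1 / (1 - Complex.I * A)) * H := by
    field_simp
    linear_combination -hc - hm
  set φ : ℂ := -(1 / (1 - Complex.I * A)) * H with hφ
  have hp := measurable_pdE (μ := μ) 0
  let f : E3 → ℂ := fun v =>
    h v / (l + Complex.I * (v 0 : ℂ)) - Complex.I * (pdE 0 μ v : ℂ) * φ / (l + Complex.I * (v 0 : ℂ))
  have hf (v : E3) : f v + Complex.I * (pdE 0 μ v : ℂ) * φ / (l + Complex.I * (v 0 : ℂ))
      = h v / (l + Complex.I * (v 0 : ℂ)) := sub_add_cancel _ _
  have hfφ : -(∫ w : E3, (((w 0) ^ 2 : ℝ) : ℂ) * f w) = φ := by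
    rw [integral_sq_mul_of_resolvent_eq hμint hl hmeas hint (.of_forall hf), ← hA, ← hH, hφ]
    field_simp
    ring
  refine ⟨f, ⟨by fun_prop, ?_, .of_forall fun v => by rw [hfφ]; exact hf v⟩, hfφ, ?_⟩
  · have hw : Measurable fun v : E3 => 1 + ‖v‖ ^ 2 := by fun_prop
    have hwle (v : E3) : |1 + ‖v‖ ^ 2| ≤ 1 + ‖v‖ ^ 2 := (abs_of_nonneg (by positivity)).le
    have hI := (integrable_mul_div_of_weighted hl hmeas hint hw hwle).sub
      ((integrable_mul_div_of_weighted hl (by fun_prop) (integrable_weighted_pdE hμint 0)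
        hw hwle).const_mul (Complex.I * φ))
    refine hI.congr (.of_forall fun v => ?_)
    simp only [f, Pi.sub_apply]
    ring
  · intro g _ _ hg
    have hgφ := multiplier_eq (integral_sq_mul_of_resolvent_eq hμint hl hmeas hint hg) rfl
    filter_upwards [hg] with v hv
    rw [hgφ] at hv
    exact add_right_cancel (hv.trans (hf v).symm)

end
end
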